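/- For a model (f,g) and 0 ≤ i ≤ j < I, v ∈ V, let h^{ij}_v(f,g) be the number of pairs a < b whose 1-types are {f a, f b} = {i, j} and whose normalized pair-type is v, where the normalized pair-type of (a,b) with a < b is g(a,b) if f a ≤ f b and s(g(a,b)) otherwise. Then for every (k, h) with Σk = n and Σ_v h^{ij}_v = k(i,j) for all i ≤ j, the number of models with fiber vector k and pair statistics h equals F(k,h) = C(n;k) · ∏_{0≤i≤j<I} C(k(i,j); h^{ij}) · ∏_{0≤i≤j<I} ∏_{v∈V} n_{ijv}^{h^{ij}_v}, where n_{ijv} = 1 if N i j v = true and 0 otherwise and C(k(i,j); h^{ij}) is the multinomial coefficient. Consequently, for every predicate ρ on pairs (k,h), the number of models whose statistics (k,h) satisfy ρ equals ∑_{(k,h) ⊨ ρ} F(k,h). (This is the closed form for FO² model counting with cardinality constraints on both unary and binary predicates.) -/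

import Mathlib

/-!
Fix the 1-type assignment `f`. Replacing `g` by the normalized pair-types `c` is a bijection,
because `s` is an involution and `N i j v = N j i (s v)`; it turns the compatibility condition into
`N i j (c q) = true` for every pair `q` of unordered 1-type `i ≤ j`. The models over `f` are thus
independent choices, one for each `i ≤ j`, of a colouring of the pairs of type `(i, j)`, of which
there are `k(i,j)` (`card_tpairOf`). Colourings of a finite set with prescribed colour counts and a
set of allowed colours are counted by a coefficient of `(∑ v, m_v X_v) ^ k(i,j)` with `m_v ∈ {0, 1}`
(`card_colourings`), which yields a multinomial coefficient times `∏ v, m_v ^ h_v`. The product over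
`i ≤ j` does not depend on `f`, so it remains to multiply by the number of `f` with fiber vector
`k`, again a multinomial coefficient.

For a predicate `ρ`, the set of models is split by the values of the statistics, which always
satisfy `∑ k = n` and `∑ v, h^{ij}_v = k(i,j)`.
-/

/-- The set of ordered pairs `a < b` of domain elements `Fin n`. -/
abbrev IdxPair (n : ℕ) := {p : Fin n × Fin n // p.1 < p.2}

/-- A model on the domain `Fin n`: a 1-type assignment `f : Fin n → Fin I` together with a
pair-type assignment `g` on the pairs `a < b`, compatible with `N`. -/
structure PairModel (n I : ℕ) (V : Type) (N : Fin I → Fin I → V → Bool) where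
  f : Fin n → Fin I
  g : IdxPair n → V
  valid : ∀ p : IdxPair n, N (f p.1.1) (f p.1.2) (g p) = true

/-- `n_{ij}`: the number of pair-types `v ∈ V` compatible with the 1-types `i, j`. -/
noncomputable def nty {I : ℕ} {V : Type} (N : Fin I → Fin I → V → Bool) (i j : Fin I) : ℕ :=
  Nat.card {v : V // N i j v = true}

/-- The fiber vector of `f : Fin n → Fin I`: `k_i = |f⁻¹(i)|`. -/
noncomputable def fiberVec {n I : ℕ} (f : Fin n → Fin I) : Fin I → ℕ :=
  fun i => Nat.card {a : Fin n // f a = i}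

/-- `k(i,j) = k_i (k_i − 1)/2` if `i = j` and `k_i · k_j` otherwise. -/
def kij {I : ℕ} (k : Fin I → ℕ) (i j : Fin I) : ℕ :=
  if i = j then k i * (k i - 1) / 2 else k i * k j

/-- Unordered pairs of 1-types, represented by ordered pairs `i ≤ j`. -/
abbrev TPair (I : ℕ) := {p : Fin I × Fin I // p.1 ≤ p.2}

/-- The normalized pair-type of a pair `a < b` in a model: `g(a,b)` if `f a ≤ f b`,
and `s (g(a,b))` otherwise. -/
def normType {n I : ℕ} {V : Type} {N : Fin I → Fin I → V → Bool}
    (s : V → V) (ω : PairModel n I V N) (q : IdxPair n) : V :=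
  if ω.f q.1.1 ≤ ω.f q.1.2 then ω.g q else s (ω.g q)

/-- `h^{ij}_v(ω)`: the number of pairs `a < b` whose 1-types are `{f a, f b} = {i, j}` and
whose normalized pair-type is `v`. -/
noncomputable def hstat {n I : ℕ} {V : Type} {N : Fin I → Fin I → V → Bool}
    (s : V → V) (ω : PairModel n I V N) (p : TPair I) (v : V) : ℕ :=
  Nat.card {q : IdxPair n //
    ((ω.f q.1.1 = p.1.1 ∧ ω.f q.1.2 = p.1.2) ∨ (ω.f q.1.1 = p.1.2 ∧ ω.f q.1.2 = p.1.1)) ∧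
    normType s ω q = v}

/-! ### Colourings with prescribed colour counts -/

/-- Allowed colourings with colour counts `h`: the coefficient of `∏ v, X_v ^ h_v` in
`∏ a, ∑ v, m_v X_v`, where `m_v` indicates the allowed colours. -/
theorem card_colourings {α V : Type*} [Fintype α] [Fintype V]
    (M : V → Bool) (h : V → ℕ) (hh : ∑ v, h v = Nat.card α) :
    Nat.card {c : α → V // (∀ a, M (c a) = true) ∧ ∀ v, Nat.card {a // c a = v} = h v} =
      Nat.multinomial Finset.univ h * ∏ v, (if M v then 1 else 0) ^ h v := by
  classical
  set m : V → ℕ := fun v => if M v then 1 else 0 with hm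
  set d : V →₀ ℕ := Finsupp.equivFunOnFinite.symm h with hd
  have key := MvPolynomial.coeff_linearCombination_X_pow_of_fintype (R := ℕ) m d (Fintype.card α)
  have hsum : d.sum (fun _ x => x) = Fintype.card α := by
    rw [Finsupp.sum_fintype _ _ (by simp)]
    simpa [hd] using hh
  rw [if_pos hsum, Finsupp.prod_fintype _ _ (by simp),
    Finsupp.multinomial_eq_of_support_subset (Finset.subset_univ _)] at key
  have hdh : (d : V → ℕ) = h := rfl
  rw [hdh] at key
  simp only [Nat.cast_id] at key
  rw [← key, ← Finset.card_univ, ← Finset.prod_const, Finset.prod_univ_sum,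
    Fintype.piFinset_univ, MvPolynomial.coeff_sum, Nat.card_eq_fintype_card,
    Fintype.card_subtype, Finset.card_filter]
  refine Finset.sum_congr rfl fun c _ => ?_
  have h1 : ∏ a, m (c a) • (MvPolynomial.X (c a) : MvPolynomial V ℕ) =
      MvPolynomial.monomial (∑ a, Finsupp.single (c a) 1) (∏ a, m (c a)) := by
    rw [MvPolynomial.monomial_sum_index, MvPolynomial.C_mul']
    simp only [MvPolynomial.X, Finset.prod_smul]
  rw [h1, MvPolynomial.coeff_monomial]
  have h2 : (∑ a, Finsupp.single (c a) 1 = d) ↔ ∀ v, Nat.card {a // c a = v} = h v := by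
    rw [Finsupp.ext_iff]
    refine forall_congr' fun v => ?_
    rw [← hdh, Finsupp.finsetSum_apply, Nat.card_eq_fintype_card, Fintype.card_subtype,
      Finset.card_filter]
    simp only [Finsupp.single_apply]
  have h3 : ∏ a, m (c a) = if ∀ a, M (c a) = true then 1 else 0 := by
    simp only [hm, Finset.prod_ite_zero, Finset.prod_const_one, Finset.mem_univ, true_imp_iff]
  simp only [h2, h3, ite_and]
  split_ifs <;> rfl

/-- A colouring of a set partitioned by `t` is a family of colourings of the classes. -/
def colouringEquiv {α T V : Type*} (t : α → T) (M : T → V → Bool) (h : T → V → ℕ) :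
    {c : α → V // (∀ a, M (t a) (c a) = true) ∧
      ∀ p v, Nat.card {a // t a = p ∧ c a = v} = h p v} ≃
    ∀ p : T, {c : {a // t a = p} → V // (∀ a, M p (c a) = true) ∧
      ∀ v, Nat.card {a // c a = v} = h p v} where
  toFun c p := ⟨fun a => c.1 a.1, by
    rintro ⟨a, rfl⟩; exact c.2.1 a, fun v => by
    rw [← c.2.2 p v]
    exact Nat.card_congr (Equiv.subtypeSubtypeEquivSubtypeInter (fun a => t a = p)
      (fun a => c.1 a = v))⟩
  invFun c := ⟨fun a => (c (t a)).1 ⟨a, rfl⟩, fun a => (c (t a)).2.1 ⟨a, rfl⟩, fun p v => by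
    rw [← (c p).2.2 v]
    refine Nat.card_congr ⟨fun a => ⟨⟨a.1, a.2.1⟩, ?_⟩, fun a => ⟨a.1.1, a.1.2, ?_⟩,
      fun _ => rfl, fun _ => rfl⟩
    · obtain ⟨a, rfl, h⟩ := a; exact h
    · obtain ⟨⟨a, rfl⟩, h⟩ := a; exact h⟩
  left_inv c := rfl
  right_inv c := by
    funext p
    apply Subtype.ext
    funext ⟨a, ha⟩
    subst ha
    rfl

theorem card_partitioned_colourings {α T V : Type*} [Finite α] [Fintype T] [Fintype V]
    (t : α → T) (M : T → V → Bool) (h : T → V → ℕ)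
    (hh : ∀ p, ∑ v, h p v = Nat.card {a // t a = p}) :
    Nat.card {c : α → V // (∀ a, M (t a) (c a) = true) ∧
      ∀ p v, Nat.card {a // t a = p ∧ c a = v} = h p v} =
    (∏ p, Nat.multinomial Finset.univ (h p)) * ∏ p, ∏ v, (if M p v then 1 else 0) ^ h p v := by
  classical
  have := Fintype.ofFinite α
  rw [Nat.card_congr (colouringEquiv t M h), Nat.card_pi, ← Finset.prod_mul_distrib]
  exact Finset.prod_congr rfl fun p _ => card_colourings (M p) (h p) (hh p)

/-! ### Pairs of a given unordered 1-type -/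

/-- The unordered 1-type of a pair `a < b`, as the sorted pair of `f a` and `f b`. -/
def tpairOf {n I : ℕ} (f : Fin n → Fin I) (q : IdxPair n) : TPair I :=
  ⟨(min (f q.1.1) (f q.1.2), max (f q.1.1) (f q.1.2)), min_le_max⟩

theorem tpairOf_eq_iff {n I : ℕ} (f : Fin n → Fin I) (q : IdxPair n) (p : TPair I) :
    tpairOf f q = p ↔
      ((f q.1.1 = p.1.1 ∧ f q.1.2 = p.1.2) ∨ (f q.1.1 = p.1.2 ∧ f q.1.2 = p.1.1)) := by
  obtain ⟨⟨i, j⟩, hij⟩ := p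
  simp only [tpairOf, Subtype.mk.injEq, Prod.mk.injEq]
  rcases le_total (f q.1.1) (f q.1.2) with h | h
  · rw [min_eq_left h, max_eq_right h]; grind
  · rw [min_eq_right h, max_eq_left h]; grind

/-- `S.offDiag` splits into its increasing and its decreasing pairs, which are equinumerous. -/
theorem card_lt_pairs {n : ℕ} (S : Finset (Fin n)) :
    Nat.card {q : IdxPair n // q.1.1 ∈ S ∧ q.1.2 ∈ S} = S.card * (S.card - 1) / 2 := by
  classical
  set A := {x ∈ S ×ˢ S | x.1 < x.2} with hA
  set B := {x ∈ S ×ˢ S | x.2 < x.1} with hB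
  have e : Nat.card {q : IdxPair n // q.1.1 ∈ S ∧ q.1.2 ∈ S} = A.card := by
    rw [← Nat.card_eq_finsetCard A]
    refine Nat.card_congr ⟨fun q => ⟨q.1.1, ?_⟩, fun x => ⟨⟨x.1, ?_⟩, ?_⟩,
      fun _ => rfl, fun _ => rfl⟩
    · have := q.1.2; have := q.2; simp_all
    · exact (Finset.mem_filter.1 x.2).2
    · exact Finset.mem_product.1 (Finset.mem_filter.1 x.2).1
  have hAB : A.card = B.card := by
    refine Finset.card_bij' (fun x _ => x.swap) (fun x _ => x.swap) ?_ ?_ ?_ ?_ <;>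
      simp +contextual [hA, hB]
  have hdisj : Disjoint A B := by
    rw [Finset.disjoint_left]
    simp only [hA, hB, Finset.mem_filter]
    rintro x ⟨_, h⟩ ⟨_, h'⟩
    exact lt_asymm h h'
  have hU : A ∪ B = S.offDiag := by
    ext x
    simp only [hA, hB, Finset.mem_union, Finset.mem_filter, Finset.mem_product,
      Finset.mem_offDiag]
    grind
  have := Finset.card_union_of_disjoint hdisj
  rw [hU, Finset.offDiag_card, ← hAB] at this
  rw [e, Nat.mul_sub, mul_one]
  omega

theorem card_tpairOf {n I : ℕ} (f : Fin n → Fin I) (p : TPair I) :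
    Nat.card {q : IdxPair n // tpairOf f q = p} = kij (fiberVec f) p.1.1 p.1.2 := by
  classical
  simp only [tpairOf_eq_iff]
  obtain ⟨⟨i, j⟩, hij⟩ := p
  simp only at hij ⊢
  unfold kij
  split_ifs with h
  · subst h
    have hk : fiberVec f i = (Finset.univ.filter fun a => f a = i).card := by
      simp [fiberVec, Fintype.card_subtype]
    rw [hk, ← card_lt_pairs]
    simp
  · rw [fiberVec, fiberVec, ← Nat.card_prod]
    -- `a < b` with 1-types `{i, j}` corresponds to (the element of type `i`, that of type `j`)
    refine Nat.card_congr ⟨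
      fun q => if hq : f q.1.1.1 = i then (⟨q.1.1.1, hq⟩, ⟨q.1.1.2, ?_⟩)
        else (⟨q.1.1.2, ?_⟩, ⟨q.1.1.1, ?_⟩),
      fun x => if hx : x.1.1 < x.2.1 then ⟨⟨(x.1.1, x.2.1), hx⟩, Or.inl ⟨x.1.2, x.2.2⟩⟩
        else ⟨⟨(x.2.1, x.1.1), ?_⟩, Or.inr ⟨x.2.2, x.1.2⟩⟩, ?_, ?_⟩
    · have := q.2; grind
    · have := q.2; grind
    · have := q.2; grind
    · have h1 := x.1.2
      have h2 := x.2.2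
      refine lt_of_le_of_ne (not_lt.1 hx) fun he => h ?_
      exact h1.symm.trans ((congrArg f he.symm).trans h2)
    · rintro ⟨⟨⟨a, b⟩, hab⟩, hq⟩
      simp only at hab hq
      by_cases ha : f a = i
      · simp [ha, hab]
      · simp [ha, not_lt.2 hab.le]
    · rintro ⟨⟨a, ha⟩, ⟨b, hb⟩⟩
      by_cases hab : a < b
      · simp [hab, ha]
      · have : ¬ f b = i := by rw [hb]; exact fun e => h e.symm
        simp [hab, this]

/-! ### Models as colourings -/

/-- Compatibility of `v` with the ordered pair `q` is compatibility of the normalized pair-type with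
the sorted 1-types. -/
theorem normType_twist {n I : ℕ} {V : Type} {N : Fin I → Fin I → V → Bool} {s : V → V}
    (hN : ∀ i j v, N i j v = N j i (s v)) (f : Fin n → Fin I) (q : IdxPair n) (v : V) :
    N (f q.1.1) (f q.1.2) v = N (tpairOf f q).1.1 (tpairOf f q).1.2
      (if f q.1.1 ≤ f q.1.2 then v else s v) := by
  simp only [tpairOf]
  split_ifs with h
  · rw [min_eq_left h, max_eq_right h]
  · rw [min_eq_right (le_of_not_ge h), max_eq_left (le_of_not_ge h), hN]

theorem hstat_eq {n I : ℕ} {V : Type} {N : Fin I → Fin I → V → Bool} (s : V → V)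
    (ω : PairModel n I V N) (p : TPair I) (v : V) :
    hstat s ω p v = Nat.card {q : IdxPair n // tpairOf ω.f q = p ∧ normType s ω q = v} := by
  simp only [hstat, tpairOf_eq_iff]

/-- A model with statistics `(k, h)` amounts to a 1-type assignment with fiber vector `k` together
with its normalized pair-types, viewed as a colouring of the pairs `a < b`. -/
def modelEquiv {n I : ℕ} {V : Type} {s : V → V} (hs : Function.Involutive s)
    {N : Fin I → Fin I → V → Bool} (hN : ∀ i j v, N i j v = N j i (s v))
    (k : Fin I → ℕ) (h : TPair I → V → ℕ) :
    {ω : PairModel n I V N // fiberVec ω.f = k ∧ hstat s ω = h} ≃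
    Σ f : {f : Fin n → Fin I // fiberVec f = k},
      {c : IdxPair n → V // (∀ q, N (tpairOf f.1 q).1.1 (tpairOf f.1 q).1.2 (c q) = true) ∧
        ∀ p v, Nat.card {q // tpairOf f.1 q = p ∧ c q = v} = h p v} where
  toFun ω := ⟨⟨ω.1.f, ω.2.1⟩, ⟨normType s ω.1, fun q => by
      rw [normType, ← normType_twist hN]; exact ω.1.valid q, fun p v => by
      rw [← hstat_eq, ω.2.2]⟩⟩
  invFun x := ⟨⟨x.1.1, fun q => if x.1.1 q.1.1 ≤ x.1.1 q.1.2 then x.2.1 q else s (x.2.1 q),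
      fun q => by
        rw [normType_twist hN]
        have := x.2.2.1 q
        split_ifs with hle <;> simpa [hle, hs _] using this⟩, x.1.2, by
      funext p v
      rw [hstat_eq, ← x.2.2.2 p v]
      congr! 5 with q
      simp only [normType]
      split_ifs <;> simp [hs _]⟩
  left_inv ω := by
    obtain ⟨⟨f, g, hv⟩, h1, h2⟩ := ω
    simp only [normType, Subtype.mk.injEq, PairModel.mk.injEq, true_and]
    funext q
    split_ifs <;> simp [hs _]
  right_inv x := by
    obtain ⟨⟨f, hf⟩, c, h1, h2⟩ := x
    simp only [Sigma.mk.injEq, heq_eq_eq, true_and, Subtype.mk.injEq]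
    funext q
    simp only [normType]
    split_ifs <;> simp [hs _]

theorem card_models {n I : ℕ} {V : Type} [Fintype V] {s : V → V} (hs : Function.Involutive s)
    {N : Fin I → Fin I → V → Bool} (hN : ∀ i j v, N i j v = N j i (s v))
    (k : Fin I → ℕ) (h : TPair I → V → ℕ) (hk : ∑ i, k i = n)
    (hh : ∀ p : TPair I, ∑ v, h p v = kij k p.1.1 p.1.2) :
    Nat.card {ω : PairModel n I V N // fiberVec ω.f = k ∧ hstat s ω = h} =
      Nat.multinomial Finset.univ k *
        (∏ p : TPair I, Nat.multinomial Finset.univ (h p)) *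
        ∏ p : TPair I, ∏ v : V, (if N p.1.1 p.1.2 v then 1 else 0) ^ h p v := by
  classical
  have hf : Nat.card {f : Fin n → Fin I // fiberVec f = k} = Nat.multinomial Finset.univ k := by
    have := card_colourings (α := Fin n) (fun _ => true) k (by simpa using hk)
    simpa [funext_iff, fiberVec] using this
  rw [Nat.card_congr (modelEquiv hs hN k h), Nat.card_sigma, ← hf, mul_assoc,
    Nat.card_eq_fintype_card, ← smul_eq_mul, ← Finset.card_univ, ← Finset.sum_const]
  refine Finset.sum_congr rfl fun f _ => ?_
  refine card_partitioned_colourings (tpairOf f.1) (fun p v => N p.1.1 p.1.2 v) h fun p => ?_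
  rw [hh, card_tpairOf, f.2]

/-! ### Summing over the statistics -/

theorem sum_card_fibers {α V : Type*} [Finite α] [Fintype V] (c : α → V) :
    ∑ v, Nat.card {a // c a = v} = Nat.card α := by
  rw [← Nat.card_sigma, Nat.card_congr (Equiv.sigmaFiberEquiv c)]

theorem sum_fiberVec {n I : ℕ} (f : Fin n → Fin I) : ∑ i, fiberVec f i = n := by
  simpa [fiberVec] using sum_card_fibers f

theorem sum_hstat {n I : ℕ} {V : Type} [Fintype V] {N : Fin I → Fin I → V → Bool} (s : V → V)
    (ω : PairModel n I V N) (p : TPair I) :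
    ∑ v, hstat s ω p v = kij (fiberVec ω.f) p.1.1 p.1.2 := by
  rw [← card_tpairOf, ← sum_card_fibers fun q : {q // tpairOf ω.f q = p} => normType s ω q.1]
  refine Finset.sum_congr rfl fun v _ => ?_
  rw [hstat_eq]
  exact Nat.card_congr (Equiv.subtypeSubtypeEquivSubtypeInter (fun q => tpairOf ω.f q = p)
      (fun q => normType s ω q = v)).symm

instance {n I : ℕ} {V : Type} [Finite V] (N : Fin I → Fin I → V → Bool) :
    Finite (PairModel n I V N) :=
  Finite.of_injective (fun ω => (ω.f, ω.g)) fun ω ω' h => by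
    cases ω; cases ω'; simp_all

/-- The `finsum` has finite support, contained in the image of `u`. -/
theorem card_eq_finsum_fibers {X K : Type*} [Finite X] (P : X → Prop) (u : X → K) :
    Nat.card {x // P x} = ∑ᶠ k, Nat.card {x // P x ∧ u x = k} := by
  classical
  have := Fintype.ofFinite X
  rw [finsum_eq_sum_of_support_subset (s := Finset.univ.image u)]
  · simp only [Nat.card_eq_fintype_card, Fintype.card_subtype]
    rw [Finset.card_eq_sum_card_fiberwise (f := u) (t := Finset.univ.image u) (by simp [Set.MapsTo])]
    simp only [Finset.filter_filter]
  · intro k hk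
    obtain ⟨⟨x, -, rfl⟩⟩ := (Nat.card_ne_zero.1 hk).1
    simp

/-- For every `(k, h)` with `Σk = n` and `Σ_v h^{ij}_v = k(i,j)` for all
`i ≤ j`, the number of models with fiber vector `k` and pair statistics `h` equals
`F(k,h) = C(n;k) · ∏_{0≤i≤j<I} C(k(i,j); h^{ij}) · ∏_{0≤i≤j<I} ∏_{v∈V} n_{ijv}^{h^{ij}_v}`,
where `n_{ijv} = 1` if `N i j v = true` and `0` otherwise, and `C(k(i,j); h^{ij})` is the
multinomial coefficient.  Consequently, for every predicate `ρ` on pairs `(k,h)`, the number of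
models whose statistics `(k,h)` satisfy `ρ` equals `∑_{(k,h) ⊨ ρ} F(k,h)` — the closed form for
FO² model counting with cardinality constraints on both unary and binary predicates. -/
theorem stmt7 (n I : ℕ) (V : Type) [Fintype V] [DecidableEq V]
    (s : V → V) (hs : Function.Involutive s)
    (N : Fin I → Fin I → V → Bool) (hN : ∀ i j v, N i j v = N j i (s v)) :
    (∀ (k : Fin I → ℕ) (h : TPair I → V → ℕ), (∑ i, k i) = n →
        (∀ p : TPair I, (∑ v, h p v) = kij k p.1.1 p.1.2) →
        Nat.card {ω : PairModel n I V N // fiberVec ω.f = k ∧ hstat s ω = h} =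
          Nat.multinomial Finset.univ k *
            (∏ p : TPair I, Nat.multinomial Finset.univ (h p)) *
            ∏ p : TPair I, ∏ v : V, (if N p.1.1 p.1.2 v then 1 else 0) ^ h p v) ∧
      ∀ ρ : (Fin I → ℕ) → (TPair I → V → ℕ) → Prop,
        Nat.card {ω : PairModel n I V N // ρ (fiberVec ω.f) (hstat s ω)} =
          ∑ᶠ (k : Fin I → ℕ) (h : TPair I → V → ℕ)
            (_ : (∑ i, k i) = n ∧ (∀ p : TPair I, (∑ v, h p v) = kij k p.1.1 p.1.2) ∧ ρ k h),
            Nat.multinomial Finset.univ k *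
              (∏ p : TPair I, Nat.multinomial Finset.univ (h p)) *
              ∏ p : TPair I, ∏ v : V, (if N p.1.1 p.1.2 v then 1 else 0) ^ h p v := by
  have hfin := fun k h hk hh => card_models (n := n) hs hN k h hk hh
  refine ⟨hfin, fun ρ => ?_⟩
  rw [card_eq_finsum_fibers _ fun ω => fiberVec ω.f]
  refine finsum_congr fun k => ?_
  rw [card_eq_finsum_fibers _ fun ω => hstat s ω]
  refine finsum_congr fun h => ?_
  classical
  rw [finsum_eq_if]
  split_ifs with hc
  · rw [← hfin k h hc.1 hc.2.1]
    refine Nat.card_congr (Equiv.subtypeEquivRight fun ω => ?_)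
    refine ⟨fun hω => ⟨hω.1.2, hω.2⟩, ?_⟩
    rintro ⟨rfl, rfl⟩
    exact ⟨⟨hc.2.2, rfl⟩, rfl⟩
  · rw [Nat.card_eq_zero]
    left
    refine ⟨?_⟩
    rintro ⟨ω, ⟨hρ, rfl⟩, rfl⟩
    exact hc ⟨sum_fiberVec _, sum_hstat s ω, hρ⟩
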